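/- Let α be the unique positive real root of 457α⁴ − 246α² + 72α − 27 = 0 (α ≈ 0.6597177), let ζ = (1 − 9α + √(73α² − 18α + 9)) / (4 + 4α), and let γ = α·log₂ 9 + 2α·log₂((1 + 2ζ)/(1 − ζ)²) − (1 − α)·log₂ ζ (γ ≈ 3.9215913). Then there exists a real constant C such that for all m ≥ 1, |log₂ maxocc((000111)^m) − (γ·m − (1/2)·log₂ m)| ≤ C; that is, the subword entropy of (000111)^m equals γm − (1/2)log₂ m + O(1) as m → ∞. -/

import Mathlib

/-!
The words are analysed by generating functions. Write `u` as a sequence of `r` runs of lengths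
`a₁, …, a_r`. Reading `(000111)^m` as `2m` alternating blocks of length three, an occurrence of `u` is
determined by how many blocks each run consumes (up to the block holding its last letter) and by the
placement of the run inside them. Hence the number of occurrences is the coefficient of `X ^ (2m)` (or
`X ^ (2m - 1)` if `u` starts with `1`) in `A a₁ ⋯ A a_r / (1 - X)`, where `A a` counts the placements of
one run (`occ_runs`).

Saddle point. For `0 < y ≤ √(1/8)` the value of `A a` at `y` is largest for `a = 2`, where it is
`B y = 3y(1 + 2y²) / (1 - y²)²`. The equations for `α` and `ζ` say precisely that `B √ζ = 1`, and then
`γ = -log₂ ζ` (`zeta_facts`, `B_sqrt_eq_one`, `gamma_eq`). So the claim is that `maxocc` is of exact order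
`ζ ^ (-m) / √m`.

Upper bound. Each `A a` is `Q = 1 / (1 - X²)` times a series with nonnegative coefficients. Therefore the
coefficients of a product of `r` of them, weighted by `y ^ N`, are at most `K (B y) ^ r / √(r + 1)`,
because this holds for `Q ^ r`, whose weighted coefficients are negative binomial probabilities
(`negBin_le`, `coeff_Dps_le`). At `y = √ζ` this settles words with `r ≥ m / 4`; for fewer runs the choice
`y = √(1/10)` gives an exponentially smaller bound (`coeff_Dps_upper`).

Lower bound. The coefficients of `A 2` weighted by powers of `√ζ` form an aperiodic probability law with
exponential tails. Its renewal sequence is bounded below by a positive constant, and by Chernoff bounds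
only `O(√m)` convolution powers contribute substantially at `2m`, so one of them has mass at least
`κ / √m` there (`exists_coeff_pow_ge`). The corresponding word has all runs of length two.
-/

open List Real

/-- `occ w u` is the number of occurrences of `u` as a subword (subsequence) of `w`,
i.e. the multiplicity of `u` among the `2^|w|` sublists of `w`. -/
def occ {α : Type*} [DecidableEq α] (w u : List α) : ℕ := w.sublists.count u

/-- `maxocc w` is the maximal number of occurrences of any subword of `w`. -/
noncomputable def maxocc {α : Type*} [DecidableEq α] (w : List α) : ℕ :=
  sSup {n : ℕ | ∃ u : List α, occ w u = n}

/-- `rep v m` is the concatenation of `m` copies of the word `v`. -/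
def rep {α : Type*} (v : List α) (m : ℕ) : List α := (List.replicate m v).flatten

/-! ### Block words and run decompositions -/

/-- The word made of `N` alternating blocks of three equal letters, the first block having letter `c`. -/
def altw (c : Fin 2) : ℕ → List (Fin 2)
  | 0 => []
  | N + 1 => c :: c :: c :: altw (c + 1) N

/-- The word with alternating runs, starting with letter `c`, of lengths given by the list `as`. All
lengths are required to be positive wherever the run decomposition matters. -/
def runs (c : Fin 2) : List ℕ → List (Fin 2)
  | [] => []
  | a :: as => List.replicate a c ++ runs (c + 1) as

lemma fin2_add (c : Fin 2) : c + 1 + 1 = c := by revert c; decide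
lemma fin2_ne (c : Fin 2) : c + 1 ≠ c := by revert c; decide
lemma fin2_eq_of_ne {c d : Fin 2} : c ≠ d → c = d + 1 := by revert c d; decide

lemma rep_eq_altw (m : ℕ) : rep ([0, 0, 0, 1, 1, 1] : List (Fin 2)) m = altw 0 (2 * m) := by
  induction m with
  | zero => rfl
  | succ m ih =>
    rw [rep, List.replicate_succ, List.flatten_cons]
    change _ ++ rep _ m = _
    rw [ih]
    rfl

lemma exists_runs (u : List (Fin 2)) :
    ∃ c as, (∀ a ∈ as, 1 ≤ a) ∧ u = runs c as := by
  induction u with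
  | nil => exact ⟨0, [], by simp, rfl⟩
  | cons x u ih =>
    obtain ⟨c, as, has, rfl⟩ := ih
    cases as with
    | nil => exact ⟨x, [1], by simp, by simp [runs]⟩
    | cons a as =>
      by_cases h : c = x
      · subst h
        refine ⟨c, (a + 1) :: as, ?_, by simp [runs, List.replicate_succ]⟩
        intro b hb
        rcases List.mem_cons.1 hb with rfl | hb
        · omega
        · exact has b (List.mem_cons_of_mem _ hb)
      · refine ⟨x, 1 :: a :: as, ?_, by rw [fin2_eq_of_ne h]; simp [runs]⟩
        intro b hb
        rcases List.mem_cons.1 hb with rfl | hb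
        · exact le_rfl
        · exact has b hb

lemma runs_head (c : Fin 2) (as : List ℕ) (has : ∀ a ∈ as, 1 ≤ a) :
    (runs (c + 1) as).head? ≠ some c := by
  cases as with
  | nil => simp [runs]
  | cons a as =>
    have ha := has a (by simp)
    obtain ⟨b, rfl⟩ : ∃ b, a = b + 1 := ⟨a - 1, by omega⟩
    simp [runs, List.replicate_succ]

/-! ### Counting occurrences letter by letter -/

section occ
variable {β : Type*} [DecidableEq β]

lemma occ_eq' (w u : List β) : occ w u = w.sublists'.count u :=
  (List.sublists_perm_sublists' w).count_eq u

lemma occ_nil_cons (x : β) (u : List β) : occ [] (x :: u) = 0 := by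
  simp [occ]

lemma occ_nil_right (w : List β) : occ w ([] : List β) = 1 := by
  induction w with
  | nil => simp [occ]
  | cons x w ih =>
    rw [occ_eq'] at *
    rw [List.sublists'_cons, List.count_append, ih]
    simp [List.count_eq_zero]

lemma occ_cons_self (x : β) (w u : List β) :
    occ (x :: w) (x :: u) = occ w (x :: u) + occ w u := by
  simp only [occ_eq', List.sublists'_cons, List.count_append]
  rw [List.count_map_of_injective _ _ (List.cons_injective)]

lemma occ_cons_of_head (x : β) (w u : List β) (h : u.head? ≠ some x) :
    occ (x :: w) u = occ w u := by
  simp only [occ_eq', List.sublists'_cons, List.count_append]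
  rw [Nat.add_eq_left, List.count_eq_zero]
  intro hm
  obtain ⟨v, -, rfl⟩ := List.mem_map.1 hm
  simp at h

end occ

/-! ### Generating functions for the runs -/

open PowerSeries

/-- Number of `a`-element subsets of `3j + 3` positions that meet the last three positions. -/
noncomputable def H (a j : ℕ) : ℝ := ((3 * j + 3).choose a : ℝ) - ((3 * j).choose a : ℝ)

lemma choose_three (n a : ℕ) : (n + 3).choose (a + 3) =
    n.choose (a + 3) + 3 * n.choose (a + 2) + 3 * n.choose (a + 1) + n.choose a := by
  simp only [Nat.choose_succ_succ']; ring

lemma H_zero (j : ℕ) : H 0 j = 0 := by simp [H]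
lemma H_one (j : ℕ) : H 1 j = 3 := by simp [H]
lemma H_two_succ (j : ℕ) : H 2 (j + 1) = H 2 j + 3 * H 1 j := by
  simp only [H, Nat.cast_choose_two, Nat.choose_one_right]; push_cast; ring
lemma H_succ (a j : ℕ) :
    H (a + 3) (j + 1) = H (a + 3) j + 3 * H (a + 2) j + 3 * H (a + 1) j + H a j := by
  have e : 3 * (j + 1) = 3 * j + 3 := by ring
  simp only [H, e]
  rw [choose_three (3 * j + 3) a, choose_three (3 * j) a]
  push_cast
  ring

/-- Generating function of a single run of length `a`: the coefficient of `X ^ n` counts the placements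
of the run, starting from a block of its own letter, whose last letter falls into the `n`-th block.
Only odd `n = 2j + 1` contribute; the run then uses `j + 1` blocks of its own letter. -/
noncomputable def A (a : ℕ) : ℝ⟦X⟧ := PowerSeries.mk fun n => if n % 2 = 1 then H a (n / 2) else 0

lemma A_zero : A 0 = 0 := by
  ext n; simp [A, H_zero]

lemma A_one : A 1 = 3 * X + X ^ 2 * A 1 := by
  ext n
  have e : (3 : ℝ⟦X⟧) = C 3 := rfl
  rcases n with _ | _ | n
  · simp [A]
  · simp [A, H, coeff_X_pow_mul', e]
  · have : (n + 2) / 2 = n / 2 + 1 := by omega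
    have h2 : (n + 1 + 1) % 2 = n % 2 := by omega
    simp [A, coeff_X_pow_mul', h2, H_one, e]

lemma A_two : A 2 = 3 * X + X ^ 2 * (A 2 + 3 * A 1) := by
  ext n
  have e : (3 : ℝ⟦X⟧) = C 3 := rfl
  rcases n with _ | _ | n
  · simp [A]
  · simp [A, H, coeff_X_pow_mul', e]
  · have : (n + 2) / 2 = n / 2 + 1 := by omega
    have h2 : (n + 1 + 1) % 2 = n % 2 := by omega
    simp [A, coeff_X_pow_mul', this, h2, H_two_succ, e]
    split_ifs <;> ring

/-- The recursion in `a` comes from choosing how many of the `a + 3` letters go into the first block. -/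
lemma A_succ (a : ℕ) : A (a + 3) = (if a = 0 then X else 0) +
    X ^ 2 * (A (a + 3) + 3 * A (a + 2) + 3 * A (a + 1) + A a) := by
  ext n
  have e : (3 : ℝ⟦X⟧) = C 3 := rfl
  rcases n with _ | _ | n
  · split_ifs <;> simp [A]
  · rcases a with _ | a
    · simp [A, H, coeff_X_pow_mul']
    · simp [A, H, coeff_X_pow_mul', Nat.choose_eq_zero_of_lt (show 3 < a + 1 + 3 by omega)]
  · have h0 : (coeff (n + 2)) (if a = 0 then X else 0 : ℝ⟦X⟧) = 0 := by
      split_ifs <;> simp [coeff_X]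
    have : (n + 2) / 2 = n / 2 + 1 := by omega
    rw [map_add, h0]
    have h2 : (n + 1 + 1) % 2 = n % 2 := by omega
    simp [A, coeff_X_pow_mul', this, h2, H_succ, e]
    split_ifs <;> ring

/-- Generating function, over the number `N` of blocks, of the number of occurrences of a word with
run lengths `as`: the factor `1 / (1 - X) = mk 1` accounts for the unused blocks at the end. -/
noncomputable def Dps (as : List ℕ) : ℝ⟦X⟧ := (as.map A).prod * PowerSeries.mk 1

lemma occ3_one {β : Type*} [DecidableEq β] (c : β) (w u : List β) (hu : u.head? ≠ some c) :
    occ (c :: c :: c :: w) (c :: u) = occ w (c :: u) + 3 * occ w u := by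
  simp only [occ_cons_self, occ_cons_of_head _ _ _ hu]; ring

lemma occ3_two {β : Type*} [DecidableEq β] (c : β) (w u : List β) (hu : u.head? ≠ some c) :
    occ (c :: c :: c :: w) (c :: c :: u) = occ w (c :: c :: u) + 3 * occ w (c :: u)
      + 3 * occ w u := by
  simp only [occ_cons_self, occ_cons_of_head _ _ _ hu]; ring

lemma occ3 {β : Type*} [DecidableEq β] (c : β) (w u : List β) :
    occ (c :: c :: c :: w) (c :: c :: c :: u) = occ w (c :: c :: c :: u)
      + 3 * occ w (c :: c :: u) + 3 * occ w (c :: u) + occ w u := by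
  simp only [occ_cons_self]; ring

/-- Prepending a run of length `a + 1` multiplies the generating function of occurrences by `A (a + 1)`.
The induction removes blocks of the ambient word two at a time. -/
lemma occ_run_step (c : Fin 2) (u : List (Fin 2)) (hu : u.head? ≠ some c) (F : ℝ⟦X⟧)
    (hF : ∀ N, (occ (altw (c + 1) N) u : ℝ) = coeff N F) (N : ℕ) :
    ∀ a, (occ (altw c N) (List.replicate (a + 1) c ++ u) : ℝ) = coeff N (A (a + 1) * F) := by
  have e : (3 : ℝ⟦X⟧) = C 3 := rfl
  induction N using Nat.twoStepInduction with
  | zero =>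
    intro a
    simp [altw, List.replicate_succ, occ_nil_cons, A]
  | one =>
    intro a
    have hF0 := hF 0
    simp only [altw] at hF0 ⊢
    rcases a with _ | _ | a
    · have : A 1 * F = X * (3 * F + X * (A 1 * F)) := by
        conv_lhs => rw [A_one]
        ring
      simp only [List.replicate_succ, List.replicate_zero, List.cons_append, List.nil_append]
      rw [occ3_one _ _ _ hu, occ_nil_cons]
      push_cast
      rw [hF0, zero_add, this, coeff_succ_X_mul]
      simp [e]
    · have : A 2 * F = X * (3 * F + X * ((A 2 + 3 * A 1) * F)) := by
        conv_lhs => rw [A_two]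
        ring
      simp only [List.replicate_succ, List.replicate_zero, List.cons_append, List.nil_append]
      rw [occ3_two _ _ _ hu, occ_nil_cons, occ_nil_cons]
      push_cast
      rw [hF0, zero_add, this, coeff_succ_X_mul]
      simp [e]
    · have : A (a + 3) * F = X * ((if a = 0 then F else 0) +
          X * ((A (a + 3) + 3 * A (a + 2) + 3 * A (a + 1) + A a) * F)) := by
        conv_lhs => rw [A_succ]
        split_ifs <;> ring
      simp only [List.replicate_succ, List.cons_append]
      rw [occ3, occ_nil_cons, occ_nil_cons, occ_nil_cons]
      push_cast
      rw [this, coeff_succ_X_mul]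
      rcases a with _ | a
      · simp [hF0]
      · simp [List.replicate_succ, occ_nil_cons]
  | more N ih _ =>
    intro a
    have skip : ∀ b, (occ (altw (c + 1) (N + 1)) (c :: (List.replicate b c ++ u)) : ℝ) =
        coeff N (A (b + 1) * F) := by
      intro b
      rw [← ih b, altw, fin2_add]
      rw [occ_cons_of_head, occ_cons_of_head, occ_cons_of_head]
      · simp [List.replicate_succ]
      all_goals simp [(fin2_ne c).symm]
    rw [altw]
    have hF1 := hF (N + 1)
    rcases a with _ | _ | a
    · have : A 1 * F = X * (3 * F + X * (A 1 * F)) := by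
        conv_lhs => rw [A_one]
        ring
      have s0 := skip 0
      simp only [List.replicate_succ, List.replicate_zero, List.cons_append, List.nil_append,
        zero_add] at s0 ⊢
      rw [occ3_one _ _ _ hu]
      push_cast
      rw [hF1, s0]
      conv_rhs => rw [this, coeff_succ_X_mul]
      simp [e, coeff_succ_X_mul]; ring
    · have : A 2 * F = X * (3 * F + X * (A 2 * F + 3 * (A 1 * F))) := by
        conv_lhs => rw [A_two]
        ring
      have s0 := skip 0
      have s1 := skip 1
      simp only [List.replicate_succ, List.replicate_zero, List.cons_append, List.nil_append,
        zero_add] at s0 s1 ⊢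
      rw [occ3_two _ _ _ hu]
      push_cast
      rw [hF1, s0, s1]
      conv_rhs => rw [this, coeff_succ_X_mul]
      simp [e, coeff_succ_X_mul]; ring
    · have : A (a + 3) * F = X * ((if a = 0 then F else 0) +
          X * (A (a + 3) * F + 3 * (A (a + 2) * F) + 3 * (A (a + 1) * F) + A a * F)) := by
        conv_lhs => rw [A_succ]
        split_ifs <;> ring
      have s0 := skip a
      have s1 := skip (a + 1)
      have s2 := skip (a + 2)
      simp only [List.replicate_succ, List.cons_append] at s0 s1 s2 ⊢
      rw [occ3]
      push_cast
      rw [s0, s1, s2]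
      conv_rhs => rw [show (a + 1 + 1 + 1 : ℕ) = a + 3 from rfl, this, coeff_succ_X_mul]
      rcases a with _ | a
      · simp [e, coeff_succ_X_mul, hF1, A_zero, add_comm]
      · have s3 := skip a
        simp only [List.replicate_succ, List.cons_append] at s3 ⊢
        rw [s3]
        simp [e, coeff_succ_X_mul]

/-- Occurrences of a word in an alternating block word are the coefficients of `Dps`: the successive runs
occupy independent consecutive stretches of blocks. -/
theorem occ_runs (as : List ℕ) (has : ∀ a ∈ as, 1 ≤ a) (c : Fin 2) (N : ℕ) :
    (occ (altw c N) (runs c as) : ℝ) = coeff N (Dps as) := by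
  induction as generalizing c N with
  | nil => simp [runs, occ_nil_right, Dps]
  | cons a as ih =>
    have has' : ∀ b ∈ as, 1 ≤ b := fun b hb => has b (List.mem_cons_of_mem _ hb)
    obtain ⟨b, rfl⟩ : ∃ b, a = b + 1 := ⟨a - 1, by have := has a (by simp); omega⟩
    rw [runs, occ_run_step c _ (runs_head c as has') (Dps as) (fun N => ih has' (c + 1) N)]
    simp [Dps, mul_assoc]

/-! ### Negative binomial probabilities -/

lemma factorial_le_stirling {n : ℕ} (hn : 1 ≤ n) :
    (n.factorial : ℝ) ≤ Real.exp 1 * √n * (n / Real.exp 1) ^ n := by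
  obtain ⟨k, rfl⟩ : ∃ k, n = k + 1 := ⟨n - 1, by omega⟩
  have h := Stirling.stirlingSeq'_antitone (Nat.zero_le k)
  simp only [Function.comp, Nat.succ_eq_add_one, zero_add, Stirling.stirlingSeq_one] at h
  rw [Stirling.stirlingSeq, div_le_iff₀ (by positivity)] at h
  refine h.trans (le_of_eq ?_)
  rw [Real.sqrt_mul (by norm_num)]
  field_simp

lemma stirling_le_factorial {n : ℕ} : √n * (n / Real.exp 1) ^ n ≤ (n.factorial : ℝ) := by
  refine le_trans ?_ (Stirling.le_factorial_stirling n)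
  gcongr
  have := Real.pi_gt_three
  nlinarith [(Nat.cast_nonneg n : (0 : ℝ) ≤ n)]

/-- From `x / l ≤ exp (x / l - 1)`; used to bound `(t(l+r)) ^ l ((1-t)(l+r)) ^ r` by `l ^ l r ^ r`. -/
lemma mul_pow_le_pow_mul_exp {l : ℕ} (hl : 1 ≤ l) {x : ℝ} (hx : 0 ≤ x) :
    x ^ l ≤ (l : ℝ) ^ l * Real.exp (x - l) := by
  have hl' : (0 : ℝ) < l := by exact_mod_cast hl
  have h1 : x / l ≤ Real.exp (x / l - 1) := by
    have := Real.add_one_le_exp (x / l - 1); linarith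
  have h2 := pow_le_pow_left₀ (by positivity) h1 l
  rw [← Real.exp_nat_mul, div_pow, div_le_iff₀ (by positivity)] at h2
  refine h2.trans (le_of_eq ?_)
  rw [mul_comm]
  congr 2
  field_simp

lemma choose_mul_le_of_pos {t : ℝ} (ht : 0 < t) (ht1 : t < 1) {l r : ℕ} (hl : 1 ≤ l)
    (hr : 1 ≤ r) :
    ((l + r).choose r : ℝ) * t ^ l * (1 - t) ^ r ≤ Real.exp 1 * √(1 / r + 1 / l) := by
  have hl' : (0 : ℝ) < l := by exact_mod_cast hl
  have hr' : (0 : ℝ) < r := by exact_mod_cast hr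
  have hfac : ((l + r).choose r : ℝ) * ((l.factorial : ℝ) * r.factorial) = (l + r).factorial := by
    have := Nat.add_choose_mul_factorial_mul_factorial l r
    rw [← mul_assoc]
    exact_mod_cast this
  have hup := factorial_le_stirling (n := l + r) (by omega)
  have h1 := stirling_le_factorial (n := l)
  have h2 := stirling_le_factorial (n := r)
  set E := Real.exp 1 with hE
  have hEpos : 0 < E := Real.exp_pos 1
  have hpow : (t * (l + r)) ^ l * ((1 - t) * (l + r)) ^ r ≤ (l : ℝ) ^ l * (r : ℝ) ^ r := by
    have a1 := mul_pow_le_pow_mul_exp hl (x := t * (l + r)) (by positivity)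
    have a2 := mul_pow_le_pow_mul_exp hr (x := (1 - t) * (l + r))
      (mul_nonneg (by linarith) (by positivity))
    have := mul_le_mul a1 a2 (pow_nonneg (mul_nonneg (by linarith) (by positivity)) _)
      (by positivity)
    refine this.trans (le_of_eq ?_)
    rw [mul_mul_mul_comm, ← Real.exp_add]
    rw [show t * (l + r) - l + ((1 - t) * (l + r) - r) = (0 : ℝ) by ring]
    simp
  have hs : √((l + r : ℕ) : ℝ) = √(1 / r + 1 / l) * (√l * √r) := by
    rw [← Real.sqrt_mul hl'.le, ← Real.sqrt_mul (by positivity)]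
    congr 1
    push_cast
    field_simp
  have key : ((l + r).choose r : ℝ) * t ^ l * (1 - t) ^ r *
      ((√l * (l / E) ^ l) * (√r * (r / E) ^ r)) ≤
      E * √(1 / r + 1 / l) * ((√l * (l / E) ^ l) * (√r * (r / E) ^ r)) := by
    have h1t : 0 ≤ 1 - t := by linarith
    calc _ ≤ ((l + r).choose r : ℝ) * t ^ l * (1 - t) ^ r *
          ((l.factorial : ℝ) * r.factorial) := by gcongr
      _ = (t ^ l * (1 - t) ^ r) * ((l + r).factorial : ℝ) := by rw [← hfac]; ring
      _ ≤ (t ^ l * (1 - t) ^ r) * (E * √((l + r : ℕ) : ℝ) * (((l + r : ℕ) : ℝ) / E) ^ (l + r)) := by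
          gcongr
      _ = E * √(1 / r + 1 / l) * (√l * √r) * (1 / E ^ (l + r)) *
          ((t * (l + r)) ^ l * ((1 - t) * (l + r)) ^ r) := by
          rw [hs, div_pow, pow_add ((l + r : ℕ) : ℝ), mul_pow, mul_pow]; push_cast; ring
      _ ≤ E * √(1 / r + 1 / l) * (√l * √r) * (1 / E ^ (l + r)) *
          ((l : ℝ) ^ l * (r : ℝ) ^ r) := by gcongr
      _ = _ := by rw [div_pow, div_pow, pow_add]; field_simp
  exact le_of_mul_le_mul_right key (by positivity)

/-- Negative binomial probabilities with `r + 1` successes are `O(1 / √(r + 1))`, uniformly in `l`. The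
probability is increasing in `l` up to about `t r / (1 - t)`, so `l` can be taken at least of order
`r`, where Stirling's formula applies. -/
lemma negBin_le {t : ℝ} (ht : 0 < t) (ht1 : t < 1) : ∃ K : ℝ, 0 < K ∧ ∀ l r : ℕ,
    ((l + r).choose r : ℝ) * t ^ l * (1 - t) ^ r ≤ K / √(r + 1) := by
  set p : ℕ → ℕ → ℝ := fun l r => ((l + r).choose r : ℝ) * t ^ l * (1 - t) ^ r with hp
  have h1t : 0 < 1 - t := by linarith
  have hstep : ∀ l r : ℕ, (l + 1) * (1 - t) ≤ t * r → p l r ≤ p (l + 1) r := by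
    intro l r h
    have hc : ((l + 1 + r).choose r : ℝ) * (l + 1) = ((l + r).choose r : ℝ) * (l + 1 + r) := by
      have := Nat.add_one_mul_choose_eq (l + r) l
      rw [Nat.choose_symm_add, show l + r + 1 = l + 1 + r by ring, Nat.choose_symm_add] at this
      rw [mul_comm ((l + r).choose r : ℝ)]
      exact_mod_cast this.symm
    have hpos : (0 : ℝ) < l + 1 := by positivity
    refine le_of_mul_le_mul_right ?_ hpos
    have : p (l + 1) r * (l + 1) = p l r * (t * (l + 1 + r)) := by
      simp only [hp]
      calc _ = (((l + 1 + r).choose r : ℝ) * (l + 1)) * t ^ (l + 1) * (1 - t) ^ r := by ring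
        _ = _ := by rw [hc]; ring
    rw [this]
    have : 0 ≤ p l r := by simp only [hp]; positivity
    gcongr
    nlinarith
  have hex : ∀ l r : ℕ, ∃ l' : ℕ, p l r ≤ p l' r ∧ t * r < (l' + 1) * (1 - t) := by
    intro l r
    by_contra! hcon
    have : ∀ k : ℕ, p l r ≤ p (l + k) r := by
      intro k
      induction k with
      | zero => simp
      | succ k ih =>
        refine ih.trans (hstep _ _ ?_)
        exact_mod_cast hcon _ ih
    obtain ⟨k, hk⟩ := exists_nat_gt (t * r / (1 - t))
    have h2 := hcon (l + k) (this k)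
    rw [div_lt_iff₀ h1t] at hk
    push_cast at h2
    nlinarith [mul_nonneg (Nat.cast_nonneg (α := ℝ) l) h1t.le]
  refine ⟨Real.exp 1 * √(2 * (1 + 2 / t)) + √(1 / t), by positivity, fun l r => ?_⟩
  obtain ⟨l', h1, h2⟩ := hex l r
  refine h1.trans ?_
  rw [le_div_iff₀ (by positivity)]
  rcases Nat.eq_zero_or_pos l' with rfl | hl
  · have : p 0 r ≤ 1 := by
      simp only [hp, zero_add, Nat.choose_self, pow_zero, Nat.cast_one, one_mul]
      exact pow_le_one₀ h1t.le (by linarith)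
    have h3 : √((r : ℝ) + 1) ≤ √(1 / t) := by
      apply Real.sqrt_le_sqrt
      rw [le_div_iff₀ ht]
      push_cast at h2
      nlinarith
    calc p 0 r * √((r : ℝ) + 1) ≤ 1 * √(1 / t) := by gcongr
      _ ≤ _ := by rw [one_mul]; exact le_add_of_nonneg_left (by positivity)
  rcases Nat.eq_zero_or_pos r with rfl | hr
  · have h3 : p l' 0 ≤ 1 := by
      simp only [hp]
      simpa using pow_le_one₀ ht.le ht1.le
    have h4 : (1 : ℝ) ≤ √(1 / t) := by
      rw [Real.one_le_sqrt, le_div_iff₀ ht]; linarith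
    have : (0 : ℝ) ≤ Real.exp 1 * √(2 * (1 + 2 / t)) := by positivity
    rw [Nat.cast_zero, zero_add, Real.sqrt_one, mul_one]
    linarith
  · have h3 := choose_mul_le_of_pos ht ht1 hl hr
    have hl' : (1 : ℝ) ≤ l' := by exact_mod_cast hl
    have hr' : (1 : ℝ) ≤ r := by exact_mod_cast hr
    have h4 : (1 : ℝ) / l' ≤ 2 / t / r := by
      rw [div_div, div_le_div_iff₀ (by positivity) (by positivity)]
      nlinarith
    have h5 : √(1 / r + 1 / l') * √((r : ℝ) + 1) ≤ √(2 * (1 + 2 / t)) := by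
      rw [← Real.sqrt_mul (by positivity)]
      apply Real.sqrt_le_sqrt
      have h6 : (1 : ℝ) / r + 1 / l' ≤ (1 + 2 / t) / r := by rw [add_div]; linarith
      calc (1 / (r : ℝ) + 1 / l') * (r + 1) ≤ ((1 + 2 / t) / r) * (2 * r) := by
            gcongr; linarith
        _ = _ := by field_simp
    calc p l' r * √((r : ℝ) + 1) ≤ (Real.exp 1 * √(1 / r + 1 / l')) * √((r : ℝ) + 1) := by
          gcongr
      _ = Real.exp 1 * (√(1 / r + 1 / l') * √((r : ℝ) + 1)) := by ring
      _ ≤ Real.exp 1 * √(2 * (1 + 2 / t)) := by gcongr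
      _ ≤ _ := le_add_of_nonneg_right (by positivity)

/-! ### Power series with nonnegative coefficients and their values -/

/-- All coefficients of `F` are nonnegative. -/
def NN (F : ℝ⟦X⟧) : Prop := ∀ n, 0 ≤ coeff n F

lemma NN.add {F G : ℝ⟦X⟧} (hF : NN F) (hG : NN G) : NN (F + G) := fun n => by
  rw [map_add]; exact add_nonneg (hF n) (hG n)

lemma NN.mul {F G : ℝ⟦X⟧} (hF : NN F) (hG : NN G) : NN (F * G) := fun n => by
  rw [coeff_mul]; exact Finset.sum_nonneg fun p _ => mul_nonneg (hF _) (hG _)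

lemma NN_X : NN X := fun n => by rw [coeff_X]; split_ifs <;> norm_num

lemma NN_C {c : ℝ} (hc : 0 ≤ c) : NN (C c) := fun n => by
  rw [coeff_C]; split_ifs <;> simp [hc]

lemma NN_zero : NN 0 := fun n => by simp
lemma NN_one : NN 1 := NN_C (c := 1) zero_le_one
lemma NN_three : NN 3 := NN_C (c := 3) (by norm_num)

lemma NN.pow {F : ℝ⟦X⟧} (hF : NN F) (r : ℕ) : NN (F ^ r) := by
  induction r with
  | zero => simpa using NN_one
  | succ r ih => rw [pow_succ]; exact ih.mul hF

/-- The series `F` converges at `y`, with sum `M`. -/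
def Ev (y : ℝ) (F : ℝ⟦X⟧) (M : ℝ) : Prop := HasSum (fun n => coeff n F * y ^ n) M

section Ev
variable {y : ℝ} {F G : ℝ⟦X⟧} {M L : ℝ}

lemma Ev.add (hF : Ev y F M) (hG : Ev y G L) : Ev y (F + G) (M + L) := by
  unfold Ev at *
  simpa [add_mul] using HasSum.add hF hG

lemma Ev.mul (hF : Ev y F M) (hG : Ev y G L) : Ev y (F * G) (M * L) := by
  unfold Ev at *
  have e : (fun n => coeff n (F * G) * y ^ n) = fun n => ∑ kl ∈ Finset.HasAntidiagonal.antidiagonal n,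
      (coeff kl.1 F * y ^ kl.1) * (coeff kl.2 G * y ^ kl.2) := by
    funext n
    rw [coeff_mul, Finset.sum_mul]
    refine Finset.sum_congr rfl fun p hp => ?_
    rw [← Finset.HasAntidiagonal.mem_antidiagonal.1 hp, pow_add]
    ring
  rw [e, ← hF.tsum_eq, ← hG.tsum_eq,
    tsum_mul_tsum_eq_tsum_sum_antidiagonal_of_summable_norm hF.summable.norm hG.summable.norm]
  exact (summable_norm_sum_mul_antidiagonal_of_summable_norm hF.summable.norm
    hG.summable.norm).of_norm.hasSum

lemma Ev_C (c : ℝ) : Ev y (C c) c := by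
  have := hasSum_single (f := fun n => coeff n (C c : ℝ⟦X⟧) * y ^ n) 0
    (fun n hn => by simp [coeff_C, hn])
  simpa [Ev] using this

lemma Ev_X : Ev y X y := by
  have := hasSum_single (f := fun n => coeff n (X : ℝ⟦X⟧) * y ^ n) 1
    (fun n hn => by simp [coeff_X, hn])
  simpa [Ev] using this

lemma Ev_zero : Ev y 0 0 := by simpa using Ev_C (y := y) 0
lemma Ev_one : Ev y 1 1 := Ev_C (y := y) 1
lemma Ev_three : Ev y 3 3 := Ev_C (y := y) 3
lemma Ev_X_sq : Ev y (X ^ 2) (y ^ 2) := by simpa [sq] using (Ev_X (y := y)).mul Ev_X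

lemma Ev_geom (hy : 0 ≤ y) (hy1 : y < 1) : Ev y (PowerSeries.mk 1) (1 - y)⁻¹ := by
  simpa [Ev] using hasSum_geometric_of_lt_one hy hy1

lemma Ev.congr (hF : Ev y F M) (h1 : F = G) (h2 : M = L) : Ev y G L := h1 ▸ h2 ▸ hF

end Ev

/-! ### Upper bound for the coefficients of a product of runs -/

/-- The series `1 / (1 - X ^ 2)`. -/
noncomputable def Q : ℝ⟦X⟧ := PowerSeries.mk fun n => if n % 2 = 0 then 1 else 0

lemma NN_Q : NN Q := fun n => by rw [Q, coeff_mk]; split_ifs <;> norm_num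

lemma Q_eq : Q = 1 + X ^ 2 * Q := by
  ext n
  rcases n with _ | _ | n
  · simp [Q]
  · simp [Q, coeff_X_pow_mul', coeff_one]
  · have h2 : (n + 1 + 1) % 2 = n % 2 := by omega
    simp [Q, coeff_X_pow_mul', coeff_one, h2]

lemma Q_mul : (1 - X ^ 2) * Q = 1 := by
  have := Q_eq
  linear_combination this

lemma Ev_Q {y : ℝ} (hy : 0 ≤ y) (hy1 : y < 1) : Ev y Q (1 - y ^ 2)⁻¹ := by
  unfold Ev
  have h0 : HasSum (fun k => coeff (2 * k) Q * y ^ (2 * k)) (1 - y ^ 2)⁻¹ := by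
    simpa [Q, pow_mul] using hasSum_geometric_of_lt_one (sq_nonneg y) (by nlinarith : y ^ 2 < 1)
  have h1 : HasSum (fun k => coeff (2 * k + 1) Q * y ^ (2 * k + 1)) 0 := by
    have : ∀ k, (2 * k + 1) % 2 = 1 := by omega
    simp [Q, this]
  simpa using HasSum.even_add_odd (f := fun n => coeff n Q * y ^ n) h0 h1

lemma coeff_Q_pow (r n : ℕ) :
    coeff n (Q ^ (r + 1)) = if n % 2 = 0 then ((n / 2 + r).choose r : ℝ) else 0 := by
  induction r generalizing n with
  | zero => simp [Q]
  | succ r ih =>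
    induction n using Nat.twoStepInduction with
    | zero =>
      have : ∀ r, coeff 0 (Q ^ r) = 1 := fun r => by simp [Q]
      rw [this]; simp
    | one =>
      have : Q ^ (r + 1 + 1) = Q ^ (r + 1) + X * (X * Q ^ (r + 1 + 1)) := by
        linear_combination Q ^ (r + 1) * Q_eq
      rw [this, map_add, ih, coeff_succ_X_mul]
      simp
    | more n ih2 _ =>
      have : Q ^ (r + 1 + 1) = Q ^ (r + 1) + X * (X * Q ^ (r + 1 + 1)) := by
        linear_combination Q ^ (r + 1) * Q_eq
      rw [this, map_add, ih, coeff_succ_X_mul, coeff_succ_X_mul, ih2]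
      have e1 : (n + 2) % 2 = n % 2 := by omega
      have e2 : (n + 2) / 2 = n / 2 + 1 := by omega
      rw [e1, e2]
      split_ifs
      · have := Nat.choose_succ_succ' (n / 2 + 1 + r) r
        rw [show n / 2 + 1 + (r + 1) = n / 2 + 1 + r + 1 by ring, this,
          show n / 2 + (r + 1) = n / 2 + 1 + r by ring]
        push_cast; ring
      · simp

/-- The weighted coefficients of powers of `Q` are negative binomial probabilities. -/
lemma coeff_Q_pow_le {y : ℝ} (hy : 0 < y) (hy1 : y < 1) : ∃ K : ℝ, 0 < K ∧ ∀ r n : ℕ,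
    coeff n (Q ^ r) * y ^ n * (1 - y ^ 2) ^ r ≤ K / √(r + 1) := by
  have ht1 : y ^ 2 < 1 := by nlinarith
  have h1t : 0 < 1 - y ^ 2 := by linarith
  obtain ⟨K, hK, h⟩ := negBin_le (pow_pos hy 2) ht1
  refine ⟨1 + 2 * K, by positivity, fun r n => ?_⟩
  rcases r with _ | r
  · rw [pow_zero, pow_zero, coeff_one]
    split_ifs with hn
    · subst hn; simp; linarith
    · simp; positivity
  · rw [coeff_Q_pow]
    split_ifs with hn
    · have e : y ^ n = (y ^ 2) ^ (n / 2) := by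
        rw [← pow_mul]; congr 1; omega
      rw [e]
      have h2 := h (n / 2) r
      have h3 : √((r + 1 : ℕ) + 1 : ℝ) ≤ 2 * √((r : ℝ) + 1) := by
        rw [show (2 : ℝ) * √((r : ℝ) + 1) = √(4 * (r + 1)) by
          rw [Real.sqrt_mul (by norm_num), show (4 : ℝ) = 2 ^ 2 by norm_num,
            Real.sqrt_sq (by norm_num)]]
        apply Real.sqrt_le_sqrt
        push_cast
        linarith [(Nat.cast_nonneg r : (0 : ℝ) ≤ r)]
      calc _ = (((n / 2 + r).choose r : ℝ) * (y ^ 2) ^ (n / 2) * (1 - y ^ 2) ^ r) *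
            (1 - y ^ 2) := by ring
        _ ≤ K / √((r : ℝ) + 1) * 1 := by
            gcongr
            nlinarith [sq_nonneg y]
        _ ≤ (1 + 2 * K) / √((r + 1 : ℕ) + 1 : ℝ) := by
            rw [mul_one, div_le_div_iff₀ (by positivity) (by positivity)]
            have : 0 ≤ √((r : ℝ) + 1) := by positivity
            nlinarith
    · simp; positivity

/-- The value of `A 2` at `y`; see `Ev_A_two`. -/
noncomputable def B (y : ℝ) : ℝ := 3 * y * (1 + 2 * y ^ 2) / (1 - y ^ 2) ^ 2

lemma NN_A (a : ℕ) : NN (A a) := by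
  intro n
  rw [A, coeff_mk]
  split_ifs
  · rw [H, sub_nonneg]
    exact_mod_cast Nat.choose_le_choose a (by omega)
  · rfl

lemma eq_mul_Q {F G : ℝ⟦X⟧} (h : F = G + X ^ 2 * F) : F = G * Q := by
  have := Q_mul
  linear_combination Q * h - F * this

lemma Ev_of_eq {y : ℝ} (hy : 0 < y) (hy8 : y ^ 2 ≤ 1 / 8)
    {F G : ℝ⟦X⟧} {M L : ℝ} (h : F = G + X ^ 2 * F) (hG : Ev y G M)
    (hL : L * (1 - y ^ 2) = M) : Ev y F L := by
  have hy1 : y < 1 := by nlinarith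
  have : 1 - y ^ 2 ≠ 0 := by linarith
  refine (hG.mul (Ev_Q hy.le hy1)).congr (eq_mul_Q h).symm ?_
  rw [← hL]; field_simp

lemma Ev_A_one {y : ℝ} (hy : 0 < y) (hy8 : y ^ 2 ≤ 1 / 8) : Ev y (A 1) (3 * y / (1 - y ^ 2)) := by
  have h1t : 1 - y ^ 2 ≠ 0 := by linarith
  refine Ev_of_eq hy hy8 (G := 3 * X) A_one (Ev_three.mul Ev_X) ?_
  field_simp

lemma Ev_A_two {y : ℝ} (hy : 0 < y) (hy8 : y ^ 2 ≤ 1 / 8) : Ev y (A 2) (B y) := by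
  have h1t : 1 - y ^ 2 ≠ 0 := by linarith
  refine Ev_of_eq hy hy8 (G := 3 * X + X ^ 2 * (3 * A 1)) ?_
    ((Ev_three.mul Ev_X).add (Ev_X_sq.mul (Ev_three.mul (Ev_A_one hy hy8)))) ?_
  · conv_lhs => rw [A_two]
    ring
  · rw [B]; field_simp; ring

/-- For `y ^ 2 ≤ 1 / 8` no run length beats `2`: `A a` takes at `y` a value `c ≤ B y`. Moreover `A a` is
`Q` times a series with nonnegative coefficients. -/
lemma Ev_A {y : ℝ} (hy : 0 < y) (hy8 : y ^ 2 ≤ 1 / 8)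
    (a : ℕ) : ∃ Φ c, NN Φ ∧ A a = Φ * Q ∧ Ev y Φ ((1 - y ^ 2) * c) ∧ Ev y (A a) c ∧
    0 ≤ c ∧ c ≤ B y := by
  have h1t : 0 < 1 - y ^ 2 := by linarith
  have hB : 0 ≤ B y := by rw [B]; positivity
  induction a using Nat.strong_induction_on with
  | _ a ih =>
  rcases a with _ | _ | _ | a
  · refine ⟨0, 0, NN_zero, by simp [A_zero], by simpa using Ev_zero, ?_, le_rfl, hB⟩
    rw [A_zero]; exact Ev_zero
  · have hE : Ev y (3 * X) (3 * y) := Ev_three.mul Ev_X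
    refine ⟨3 * X, 3 * y / (1 - y ^ 2), NN_three.mul NN_X, eq_mul_Q A_one,
      hE.congr rfl (by field_simp), Ev_A_one hy hy8, by positivity, ?_⟩
    rw [B, div_le_div_iff₀ (by positivity) (by positivity)]
    nlinarith [mul_pos hy h1t, mul_pos (mul_pos hy h1t) (pow_pos hy 2)]
  · have h2 : A 2 = (3 * X + X ^ 2 * (3 * A 1)) + X ^ 2 * A 2 := by
      conv_lhs => rw [A_two]
      ring
    refine ⟨3 * X + X ^ 2 * (3 * A 1), B y, (NN_three.mul NN_X).add
      ((NN_X.pow 2).mul (NN_three.mul (NN_A 1))), eq_mul_Q h2, ?_, Ev_A_two hy hy8, hB, le_rfl⟩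
    refine ((Ev_three.mul Ev_X).add (Ev_X_sq.mul (Ev_three.mul (Ev_A_one hy hy8)))).congr rfl ?_
    rw [B]; field_simp; ring
  · have h3 : A (a + 3) = ((if a = 0 then X else 0) + X ^ 2 * (3 * A (a + 2) + 3 * A (a + 1) + A a))
        + X ^ 2 * A (a + 3) := by
      conv_lhs => rw [A_succ]
      ring
    have hnn : NN ((if a = 0 then X else 0) + X ^ 2 * (3 * A (a + 2) + 3 * A (a + 1) + A a)) := by
      refine NN.add ?_ ((NN_X.pow 2).mul (((NN_three.mul (NN_A _)).add
        (NN_three.mul (NN_A _))).add (NN_A _)))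
      split_ifs
      exacts [NN_X, NN_zero]
    obtain ⟨c, hc, hc0, hcB⟩ : ∃ c, Ev y ((if a = 0 then X else 0) +
        X ^ 2 * (3 * A (a + 2) + 3 * A (a + 1) + A a)) ((1 - y ^ 2) * c) ∧ 0 ≤ c ∧ c ≤ B y := by
      rcases a with _ | a
      · refine ⟨y * (1 + 16 * y ^ 2 + 10 * y ^ 4) / (1 - y ^ 2) ^ 3, ?_, by positivity, ?_⟩
        · refine (Ev_X.add (Ev_X_sq.mul (((Ev_three.mul (Ev_A_two hy hy8)).add
            (Ev_three.mul (Ev_A_one hy hy8))).add Ev_zero))).congr (by simp [A_zero]) ?_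
          rw [B]; field_simp; ring
        · rw [B, div_le_div_iff₀ (by positivity) (by positivity)]
          have : y * (1 + 16 * y ^ 2 + 10 * y ^ 4) ≤ 3 * y * (1 + 2 * y ^ 2) * (1 - y ^ 2) := by
            have h : 1 + 16 * y ^ 2 + 10 * y ^ 4 ≤ 3 * (1 + 2 * y ^ 2) * (1 - y ^ 2) := by
              nlinarith [mul_nonneg (sq_nonneg y) (sub_nonneg.2 hy8)]
            nlinarith
          calc _ ≤ (3 * y * (1 + 2 * y ^ 2) * (1 - y ^ 2)) * (1 - y ^ 2) ^ 2 := by gcongr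
            _ = _ := by ring
      · obtain ⟨-, c2, -, -, -, e2, p2, b2⟩ := ih (a + 1 + 2) (by omega)
        obtain ⟨-, c1, -, -, -, e1, p1, b1⟩ := ih (a + 1 + 1) (by omega)
        obtain ⟨-, c0, -, -, -, e0, p0, b0⟩ := ih (a + 1) (by omega)
        refine ⟨y ^ 2 * (3 * c2 + 3 * c1 + c0) / (1 - y ^ 2), ?_, by positivity, ?_⟩
        · refine (Ev_zero.add (Ev_X_sq.mul (((Ev_three.mul e2).add
            (Ev_three.mul e1)).add e0))).congr (by simp) ?_
          field_simp; ring
        · rw [div_le_iff₀ h1t]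
          calc y ^ 2 * (3 * c2 + 3 * c1 + c0) ≤ y ^ 2 * (3 * B y + 3 * B y + B y) := by gcongr
            _ ≤ _ := by nlinarith
    exact ⟨_, c, hnn, eq_mul_Q h3, hc, Ev_of_eq hy hy8 h3 hc (by ring), hc0, hcB⟩

lemma prod_A {y : ℝ} (hy : 0 < y) (hy8 : y ^ 2 ≤ 1 / 8)
    (as : List ℕ) : ∃ G M, NN G ∧ (as.map A).prod = G * Q ^ as.length ∧ Ev y G M ∧
    0 ≤ M ∧ M ≤ ((1 - y ^ 2) * B y) ^ as.length := by
  have h1t : 0 < 1 - y ^ 2 := by linarith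
  induction as with
  | nil => exact ⟨1, 1, NN_one, by simp, Ev_one, by simp, by simp⟩
  | cons a as ih =>
    obtain ⟨G, M, h1, h2, h3, h4, h5⟩ := ih
    obtain ⟨Φ, c, k1, k2, k3, -, k4, k5⟩ := Ev_A hy hy8 a
    refine ⟨Φ * G, _, k1.mul h1, ?_, k3.mul h3, by positivity, ?_⟩
    · simp only [List.map_cons, List.prod_cons, List.length_cons, h2, k2]
      ring
    · rw [List.length_cons, pow_succ' _ as.length]
      exact mul_le_mul (by gcongr) h5 h4 (mul_nonneg h1t.le (k4.trans k5))

/-- A product of `r` run series is a series with nonnegative coefficients times `Q ^ r`, so its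
coefficients inherit the local bound `O(1 / √(r + 1))` from those of `Q ^ r`. The constant `K` depends
only on `y`. -/
theorem coeff_Dps_le {y : ℝ} (hy : 0 < y) (hy8 : y ^ 2 ≤ 1 / 8)
    : ∃ K : ℝ, 0 < K ∧ ∀ (as : List ℕ) (N : ℕ),
    coeff N (Dps as) * y ^ N ≤ K * B y ^ as.length / √(as.length + 1) := by
  have h1t : 0 < 1 - y ^ 2 := by linarith
  have hy1 : y < 1 := by nlinarith
  obtain ⟨K, hK, h⟩ := coeff_Q_pow_le hy hy1
  have h1y : 0 < 1 - y := by linarith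
  refine ⟨K * (1 - y)⁻¹, by positivity, fun as N => ?_⟩
  obtain ⟨G, M, h1, h2, h3, h4, h5⟩ := prod_A hy hy8 as
  set r := as.length
  set S : ℝ⟦X⟧ := G * PowerSeries.mk 1
  have hS : NN S := h1.mul fun n => by simp
  have hSe : Ev y S (M * (1 - y)⁻¹) := h3.mul (Ev_geom hy.le hy1)
  have hD : Dps as = S * Q ^ r := by rw [Dps, h2]; ring
  have hle : ∑ p ∈ Finset.HasAntidiagonal.antidiagonal N, coeff p.1 S * y ^ p.1 ≤ M * (1 - y)⁻¹ := by
    rw [Finset.Nat.sum_antidiagonal_eq_sum_range_succ_mk]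
    exact sum_le_hasSum _ (fun n _ => mul_nonneg (hS n) (by positivity)) hSe
  have key : coeff N (Dps as) * y ^ N * (1 - y ^ 2) ^ r ≤ M * (1 - y)⁻¹ * (K / √(r + 1)) := by
    rw [hD, coeff_mul, Finset.sum_mul, Finset.sum_mul]
    calc _ ≤ ∑ p ∈ Finset.HasAntidiagonal.antidiagonal N, (coeff p.1 S * y ^ p.1) * (K / √(r + 1)) := by
          refine Finset.sum_le_sum fun p hp => ?_
          rw [← Finset.HasAntidiagonal.mem_antidiagonal.1 hp, pow_add]
          calc _ = (coeff p.1 S * y ^ p.1) * (coeff p.2 (Q ^ r) * y ^ p.2 * (1 - y ^ 2) ^ r) := by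
                ring
            _ ≤ _ := mul_le_mul_of_nonneg_left (h r p.2) (mul_nonneg (hS _) (by positivity))
      _ = (∑ p ∈ Finset.HasAntidiagonal.antidiagonal N, coeff p.1 S * y ^ p.1) * (K / √(r + 1)) := by
          rw [Finset.sum_mul]
      _ ≤ _ := by gcongr
  refine le_of_mul_le_mul_right (key.trans ?_) (pow_pos h1t r)
  calc _ ≤ ((1 - y ^ 2) * B y) ^ r * (1 - y)⁻¹ * (K / √(r + 1)) := by gcongr
    _ = _ := by rw [mul_pow]; ring

/-! ### Renewal theory: a large coefficient among the powers of a probability series -/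

/-- A second order Taylor bound valid on the whole line. -/
lemma exp_le_quadratic (u : ℝ) : Real.exp u ≤ 1 + u + u ^ 2 * Real.exp |u| := by
  have h1 : 1 ≤ Real.exp |u| := Real.one_le_exp (abs_nonneg u)
  rcases le_or_gt |u| 1 with h | h
  · have := (abs_le.1 (Real.abs_exp_sub_one_sub_id_le h)).2
    nlinarith [sq_nonneg u]
  · rcases le_or_gt 0 u with h0 | h0
    · rw [abs_of_nonneg h0] at *
      have h2 : 1 ≤ u ^ 2 := by nlinarith
      have h3 : Real.exp u ≤ u ^ 2 * Real.exp u := le_mul_of_one_le_left (by positivity) h2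
      linarith
    · have h2 : Real.exp u ≤ 1 := Real.exp_le_one_iff.2 h0.le
      rw [abs_of_neg h0] at *
      nlinarith [sq_nonneg u]

/-- Multiplication by `p` multiplies a bound on the coefficients weighted by `x ^ j` by at most the value
of `p` at `x`. -/
lemma coeff_mul_le {p F : ℝ⟦X⟧} {x q M : ℝ} (hp : NN p) (hx : 0 < x) (hq : Ev x p q)
    (hM : 0 ≤ M) (hF : ∀ j, coeff j F * x ^ j ≤ M) (m : ℕ) :
    coeff m (p * F) * x ^ m ≤ q * M := by
  rw [coeff_mul, Finset.sum_mul]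
  calc _ ≤ ∑ r ∈ Finset.HasAntidiagonal.antidiagonal m, (coeff r.1 p * x ^ r.1) * M := by
        refine Finset.sum_le_sum fun r hr => ?_
        rw [← Finset.HasAntidiagonal.mem_antidiagonal.1 hr, pow_add]
        calc _ = (coeff r.1 p * x ^ r.1) * (coeff r.2 F * x ^ r.2) := by ring
          _ ≤ _ := mul_le_mul_of_nonneg_left (hF _) (mul_nonneg (hp _) (by positivity))
    _ = (∑ r ∈ Finset.HasAntidiagonal.antidiagonal m, coeff r.1 p * x ^ r.1) * M := by
        rw [Finset.sum_mul]
    _ ≤ q * M := by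
        gcongr
        rw [Finset.Nat.sum_antidiagonal_eq_sum_range_succ_mk]
        exact sum_le_hasSum _ (fun n _ => mul_nonneg (hp n) (by positivity)) hq

/-- A Chernoff-type bound for the first `a + 1` powers together. The Horner form of the geometric sum
avoids losing a factor `a + 1`. -/
lemma early_renewals_le {p : ℝ⟦X⟧} (hp : NN p) (hp0 : coeff 0 p = 0) {x q : ℝ}
    (hx : 0 < x) (hq : Ev x p q) (hq1 : 1 ≤ q) (a m : ℕ) :
    coeff m (∑ k ∈ Finset.range (a + 1), p ^ k) * x ^ m ≤ q ^ a := by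
  induction a generalizing m with
  | zero =>
    rcases m with _ | m <;> simp [coeff_one]
  | succ a ih =>
    rw [geom_sum_succ, map_add, add_mul]
    rcases m with _ | m
    · simp only [coeff_zero_eq_constantCoeff, map_mul, map_one, pow_zero] at *
      rw [hp0]
      simpa using one_le_pow₀ hq1
    · have := coeff_mul_le hp hx hq (by positivity) ih (m + 1)
      rw [pow_succ' q]
      simpa [coeff_one] using this

/-- A Chernoff-type bound for the sum `p ^ b * U` of all powers `p ^ k`, `k ≥ b`. -/
lemma late_renewals_le {p : ℝ⟦X⟧} (hp : NN p) {x q : ℝ} (hx : 0 < x)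
    (hx1 : x ≤ 1) (hq : Ev x p q) (hq0 : 0 ≤ q)
    {U : ℝ⟦X⟧} (hU1 : ∀ n, coeff n U ≤ 1) (b m : ℕ) :
    coeff m (p ^ b * U) * x ^ m ≤ q ^ b := by
  induction b generalizing m with
  | zero =>
    simp only [pow_zero, one_mul]
    calc _ ≤ 1 * x ^ m := by gcongr; exact hU1 m
      _ ≤ 1 := by rw [one_mul]; exact pow_le_one₀ hx.le hx1
  | succ b ih =>
    have := coeff_mul_le hp hx hq (by positivity) ih m
    rwa [← mul_assoc, ← pow_succ', ← pow_succ'] at this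

lemma renewal_nonneg {p : ℝ⟦X⟧} (hp : NN p) (hp0 : coeff 0 p = 0) {U : ℝ⟦X⟧}
    (hU : U = 1 + p * U) : NN U := by
  intro n
  induction n using Nat.strong_induction_on with
  | _ n ih =>
  rw [hU, map_add, coeff_mul]
  refine add_nonneg (NN_one n) (Finset.sum_nonneg fun r hr => ?_)
  have hr := Finset.HasAntidiagonal.mem_antidiagonal.1 hr
  rcases Nat.eq_zero_or_pos r.1 with h | h
  · rw [h, hp0, zero_mul]
  · exact mul_nonneg (hp _) (ih _ (by omega))

/-- The renewal sequence `U = ∑ p ^ k = 1 / (1 - p)` of an aperiodic probability law with exponential tails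
is bounded by `1` and bounded away from `0`. With `T` the series of tails of `p` one has
`T * U = 1 / (1 - X)`, so the values of `U` averaged against a summable sequence are `1`; consecutive
values of `U` drop by at most the factor `coeff 1 p`. -/
lemma renewal_bounds {p : ℝ⟦X⟧} (hp : NN p) (hp0 : coeff 0 p = 0)
    (hp1 : 0 < coeff 1 p) (hsum : Ev 1 p 1) {x₀ q₀ : ℝ} (hx₀ : 1 < x₀)
    (hq₀ : Ev x₀ p q₀) {U : ℝ⟦X⟧} (hU : U = 1 + p * U) :
    (∀ n, coeff n U ≤ 1) ∧ ∃ c : ℝ, 0 < c ∧ ∀ n, c ≤ coeff n U := by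
  have hUn := renewal_nonneg hp hp0 hU
  -- the coefficients of `T` are the tails `1 - ∑_{i ≤ n} coeff i p`
  set T : ℝ⟦X⟧ := (1 - p) * PowerSeries.mk 1 with hTdef
  have hT : ∀ n, coeff n T = 1 - ∑ i ∈ Finset.range (n + 1), coeff i p := by
    intro n
    rw [hTdef, sub_mul, one_mul, map_sub, coeff_mul,
      Finset.Nat.sum_antidiagonal_eq_sum_range_succ_mk]
    simp
  have hs1 : HasSum (fun n => coeff n p) 1 := by simpa [Ev] using hsum
  have hTn : NN T := by
    intro n
    rw [hT, sub_nonneg]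
    exact sum_le_hasSum _ (fun i _ => hp i) hs1
  have hT0 : coeff 0 T = 1 := by rw [hT, zero_add, Finset.sum_range_one, hp0, sub_zero]
  have hT1 : ∀ n, coeff n T ≤ 1 := by
    intro n
    rw [hT]
    linarith [Finset.sum_nonneg (s := Finset.range (n + 1)) (f := fun i => coeff i p)
      (fun i _ => hp i)]
  have hUT : T * U = PowerSeries.mk 1 := by
    have h1 : (1 - p) * U = 1 := by linear_combination hU
    calc T * U = ((1 - p) * U) * PowerSeries.mk 1 := by rw [hTdef]; ring
      _ = _ := by rw [h1, one_mul]
  have hconv : ∀ n, ∑ j ∈ Finset.range (n + 1), coeff j T * coeff (n - j) U = 1 := by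
    intro n
    have := congrArg (coeff n) hUT
    rw [coeff_mul, Finset.Nat.sum_antidiagonal_eq_sum_range_succ_mk] at this
    simpa using this
  have hU1 : ∀ n, coeff n U ≤ 1 := by
    intro n
    rw [← hconv n]
    have := Finset.single_le_sum (s := Finset.range (n + 1))
      (f := fun j => coeff j T * coeff (n - j) U)
      (fun j _ => mul_nonneg (hTn _) (hUn _)) (Finset.mem_range.2 (Nat.succ_pos n))
    simpa [hT0] using this
  refine ⟨hU1, ?_⟩
  have hTx : ∀ n, coeff n T ≤ q₀ * (x₀⁻¹) ^ n := by
    intro n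
    have hx0 : 0 < x₀ := by linarith
    have h1 := (hasSum_nat_add_iff' (n + 1)).2 hs1
    have h2 := (hasSum_nat_add_iff' (n + 1)).2 hq₀
    rw [hT]
    have h3 := hasSum_le (fun i => ?_) (h1.mul_right (x₀ ^ n)) h2
    · have h4 : 0 ≤ ∑ i ∈ Finset.range (n + 1), coeff i p * x₀ ^ i :=
        Finset.sum_nonneg fun i _ => mul_nonneg (hp i) (by positivity)
      rw [inv_pow, ← div_eq_mul_inv, le_div_iff₀ (by positivity)]
      linarith
    · have := hp (i + (n + 1))
      gcongr
      · exact hx₀.le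
      · omega
  have hTs : Summable (fun n => coeff n T) := by
    refine Summable.of_nonneg_of_le hTn hTx ?_
    exact (summable_geometric_of_lt_one (by positivity) (inv_lt_one_of_one_lt₀ hx₀)).mul_left _
  obtain ⟨J, hJ⟩ : ∃ J : ℕ, ∑' n, coeff (n + J) T < 1 / 2 := by
    have := tendsto_sum_nat_add (fun n => coeff n T)
    exact (this.eventually (gt_mem_nhds (by norm_num))).exists
  have hp1' : coeff 1 p ≤ 1 := le_hasSum hs1 1 fun i _ => hp i
  set ρ := coeff 1 p
  have hstep : ∀ n, ρ * coeff n U ≤ coeff (n + 1) U := by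
    intro n
    conv_rhs => rw [hU]
    rw [map_add, coeff_mul]
    have h1 := Finset.single_le_sum (s := Finset.HasAntidiagonal.antidiagonal (n + 1))
      (f := fun r => coeff r.1 p * coeff r.2 U) (fun r _ => mul_nonneg (hp _) (hUn _))
      (a := (1, n)) (Finset.HasAntidiagonal.mem_antidiagonal.2 (by simp [add_comm]))
    have h2 := NN_one (n + 1)
    simp only at h1
    linarith
  have hsteps : ∀ j n, ρ ^ j * coeff n U ≤ coeff (n + j) U := by
    intro j n
    induction j with
    | zero => simp
    | succ j ih =>
      calc _ = ρ * (ρ ^ j * coeff n U) := by ring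
        _ ≤ ρ * coeff (n + j) U := by gcongr
        _ ≤ _ := hstep _
  refine ⟨ρ ^ J / (2 * (J + 1)), by positivity, fun n => ?_⟩
  have hle : (1 : ℝ) ≤ J * (coeff n U / ρ ^ J) + 1 / 2 := by
    calc (1 : ℝ) = ∑ j ∈ Finset.range (n + 1), coeff j T * coeff (n - j) U := (hconv n).symm
      _ ≤ ∑ j ∈ Finset.range (n + 1), ((if j < J then coeff n U / ρ ^ J else 0) +
            (if j < J then 0 else coeff j T)) := by
          refine Finset.sum_le_sum fun j hj => ?_
          have hj : j ≤ n := by have := Finset.mem_range.1 hj; omega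
          split_ifs with h
          · rw [add_zero, le_div_iff₀ (by positivity)]
            have h1 := hsteps j (n - j)
            rw [Nat.sub_add_cancel hj] at h1
            have h2 : ρ ^ J ≤ ρ ^ j := pow_le_pow_of_le_one hp1.le hp1' h.le
            calc coeff j T * coeff (n - j) U * ρ ^ J ≤ 1 * coeff (n - j) U * ρ ^ j := by
                  have := hUn (n - j)
                  have := hT1 j
                  gcongr
              _ ≤ _ := by linarith
          · rw [zero_add]
            exact mul_le_of_le_one_right (hTn j) (hU1 _)
      _ ≤ ∑ j ∈ Finset.range (J + (n + 1)), ((if j < J then coeff n U / ρ ^ J else 0) +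
            (if j < J then 0 else coeff j T)) := by
          refine Finset.sum_le_sum_of_subset_of_nonneg (Finset.range_mono (by omega)) ?_
          intro j _ _
          have := hUn n
          have := hTn j
          split_ifs <;> positivity
      _ = J * (coeff n U / ρ ^ J) + ∑ j ∈ Finset.range (n + 1), coeff (j + J) T := by
          rw [Finset.sum_range_add]
          congr 1
          · rw [Finset.sum_congr rfl (g := fun _ => coeff n U / ρ ^ J)]
            · simp
            · intro j hj
              simp [Finset.mem_range.1 hj]
          · refine Finset.sum_congr rfl fun j _ => ?_
            simp [add_comm]
      _ ≤ _ := by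
          gcongr
          refine le_trans ?_ hJ.le
          exact ((summable_nat_add_iff J).2 hTs).sum_le_tsum _ (fun i _ => hTn _)
  rw [div_le_iff₀ (by positivity)]
  have h1 := hUn n
  rw [mul_div_assoc', ← sub_le_iff_le_add, le_div_iff₀ (by positivity)] at hle
  nlinarith

/-- Quadratic bound on the cumulant generating function of `p` near `0`; `μ` is the mean of `p`. -/
lemma cgf_bound {p : ℝ⟦X⟧} (hp : NN p) (hp1 : 0 < coeff 1 p) (hsum : Ev 1 p 1)
    {x₀ q₀ : ℝ} (hx₀ : 1 < x₀) (hq₀ : Ev x₀ p q₀) : ∃ μ D ε : ℝ, 0 < μ ∧ 0 ≤ D ∧ 0 < ε ∧ ∀ s : ℝ, |s| ≤ ε →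
      ∃ q, Ev (Real.exp s) p q ∧ q ≤ Real.exp (μ * s + D * s ^ 2) ∧ 0 ≤ q ∧ (0 ≤ s → 1 ≤ q) := by
  set ε := Real.log x₀ / 2 with hε
  have hε0 : 0 < ε := by have := Real.log_pos hx₀; positivity
  have hx₀e : x₀ = Real.exp (ε + ε) := by
    rw [hε, add_halves, Real.exp_log (by linarith)]
  have hs1 : HasSum (fun n => coeff n p) 1 := by simpa [Ev] using hsum
  have hxn : ∀ n : ℕ, x₀ ^ n = Real.exp (ε * n) * Real.exp (ε * n) := by
    intro n
    rw [hx₀e, ← Real.exp_nat_mul, ← Real.exp_add]; congr 1; ring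
  have hn2 : ∀ n : ℕ, (n : ℝ) ^ 2 ≤ 2 / ε ^ 2 * Real.exp (ε * n) := by
    intro n
    have := Real.quadratic_le_exp_of_nonneg (x := ε * n) (by positivity)
    rw [div_mul_eq_mul_div, le_div_iff₀ (by positivity)]
    have h0 : 0 ≤ ε * n := by positivity
    nlinarith
  have hS2 : Summable (fun n : ℕ => coeff n p * ((n : ℝ) ^ 2 * Real.exp (ε * n))) := by
    refine Summable.of_nonneg_of_le (fun n => mul_nonneg (hp n) (by positivity)) (fun n => ?_)
      (hq₀.summable.mul_left (2 / ε ^ 2))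
    have h1 := hp n
    rw [hxn]
    calc _ ≤ coeff n p * ((2 / ε ^ 2 * Real.exp (ε * n)) * Real.exp (ε * n)) := by
          gcongr; exact hn2 n
      _ = _ := by ring
  have hS1 : Summable (fun n : ℕ => coeff n p * (n : ℝ)) := by
    refine Summable.of_nonneg_of_le (fun n => mul_nonneg (hp n) (by positivity)) (fun n => ?_) hS2
    have h1 := hp n
    gcongr
    have h2 : (1 : ℝ) ≤ Real.exp (ε * n) := Real.one_le_exp (by positivity)
    have h3 : (n : ℝ) ≤ (n : ℝ) ^ 2 := by exact_mod_cast Nat.le_self_pow two_ne_zero n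
    nlinarith
  refine ⟨∑' n : ℕ, coeff n p * n, ∑' n : ℕ, coeff n p * ((n : ℝ) ^ 2 * Real.exp (ε * n)), ε,
    ?_, tsum_nonneg fun n => mul_nonneg (hp n) (by positivity), hε0, fun s hs => ?_⟩
  · refine hS1.tsum_pos (fun n => mul_nonneg (hp n) (by positivity)) 1 (by simpa using hp1)
  · have hsE : Summable (fun n => coeff n p * Real.exp s ^ n) := by
      refine Summable.of_nonneg_of_le (fun n => mul_nonneg (hp n) (by positivity)) (fun n => ?_)
        hq₀.summable
      have h1 := hp n
      gcongr
      rw [hx₀e]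
      exact Real.exp_le_exp.2 (by linarith [le_abs_self s])
    refine ⟨_, hsE.hasSum, ?_, tsum_nonneg fun n => mul_nonneg (hp n) (by positivity), ?_⟩
    · refine le_trans ?_ (Real.add_one_le_exp _)
      have hb := (hs1.add (hS1.hasSum.mul_right s)).add (hS2.hasSum.mul_right (s ^ 2))
      have := hasSum_le (fun n => ?_) hsE.hasSum hb
      · linarith
      · have h1 := hp n
        rw [← Real.exp_nat_mul]
        have h2 := exp_le_quadratic (n * s)
        have h3 : Real.exp |n * s| ≤ Real.exp (ε * n) := by
          apply Real.exp_le_exp.2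
          rw [abs_mul, Nat.abs_cast, mul_comm]
          gcongr
        calc coeff n p * Real.exp (n * s)
            ≤ coeff n p * (1 + n * s + (n * s) ^ 2 * Real.exp (ε * n)) := by
              gcongr
              refine h2.trans ?_
              gcongr
          _ = _ := by ring
    · intro hs0
      refine hasSum_le (fun n => ?_) hs1 hsE.hasSum
      exact le_mul_of_one_le_right (hp n) (one_le_pow₀ (Real.one_le_exp hs0))

set_option maxHeartbeats 2000000 in
/-- For an aperiodic probability law `p` with exponential tails, some convolution power has mass at least
`κ / √m` at `m`. Indeed `∑ₖ coeff m (p ^ k) ≥ c`, and the exponents outside a window of width `O(√m)`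
around `m / μ` contribute at most `2c / 3`, so one of the `O(√m)` exponents in the window suffices. -/
theorem exists_coeff_pow_ge {p : ℝ⟦X⟧} (hp : NN p) (hp0 : coeff 0 p = 0)
    (hp1 : 0 < coeff 1 p) (hsum : Ev 1 p 1) {x₀ q₀ : ℝ} (hx₀ : 1 < x₀)
    (hq₀ : Ev x₀ p q₀) :
    ∃ κ : ℝ, 0 < κ ∧ ∀ m : ℕ, 1 ≤ m → ∃ k : ℕ, κ / √m ≤ coeff m (p ^ k) := by
  obtain ⟨U, hU⟩ : ∃ U : ℝ⟦X⟧, U = 1 + p * U := by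
    refine ⟨(1 - p)⁻¹, ?_⟩
    have := PowerSeries.mul_inv_cancel (1 - p) (by
      rw [map_sub, ← coeff_zero_eq_constantCoeff_apply p, hp0]; simp)
    linear_combination this
  obtain ⟨hU1, c, hc, hcU⟩ := renewal_bounds hp hp0 hp1 hsum hx₀ hq₀ hU
  obtain ⟨μ, D, ε, hμ, hD, hε, hq⟩ := cgf_bound hp hp1 hsum hx₀ hq₀
  -- tilting parameter: the Chernoff bounds are applied at `exp (± δ / √m)`
  obtain ⟨δ, hδ, hδε, hδD⟩ : ∃ δ : ℝ, 0 < δ ∧ δ ≤ ε ∧ D * δ ≤ μ / 2 := by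
    refine ⟨min ε (μ / (2 * (D + 1))), by positivity, min_le_left _ _, ?_⟩
    have h1 : min ε (μ / (2 * (D + 1))) ≤ μ / (2 * (D + 1)) := min_le_right _ _
    rw [le_div_iff₀ (by positivity)] at h1
    have : 0 < min ε (μ / (2 * (D + 1))) := by positivity
    nlinarith
  -- half-width `R √m` of the window
  obtain ⟨R, hR, hRc⟩ : ∃ R : ℝ, 0 < R ∧
      Real.exp (-(δ * μ * R / 2) + D * δ ^ 2 * (1 / μ + 1)) ≤ c / 3 := by
    set z := D * δ ^ 2 * (1 / μ + 1) - Real.log (c / 3)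
    refine ⟨2 * (|z| + 1) / (δ * μ), by positivity, ?_⟩
    rw [← Real.le_log_iff_exp_le (by positivity)]
    have h1 : δ * μ * (2 * (|z| + 1) / (δ * μ)) / 2 = |z| + 1 := by field_simp
    rw [h1]
    have := le_abs_self z
    simp only [z] at *
    linarith
  refine ⟨c / 3 / (2 * R + 2), by positivity, fun m hm => ?_⟩
  have hm' : (1 : ℝ) ≤ m := by exact_mod_cast hm
  set w := √(m : ℝ) with hw
  have hw1 : 1 ≤ w := Real.one_le_sqrt.2 hm'
  have hww : w * w = m := Real.mul_self_sqrt (by linarith)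
  have hs1 : δ / w ≤ ε := (div_le_self hδ.le hw1).trans hδε
  have hsp : 0 < δ / w := by positivity
  set s := δ / w with hs
  have hsw : s * w = δ := by rw [hs]; field_simp
  have hsm : s * m = δ * w := by rw [← hww, ← mul_assoc, hsw]
  have hssm : s ^ 2 * m = δ ^ 2 := by rw [← hww, ← hsw]; ring
  set a := ⌈m / μ - R * w⌉₊ with ha
  set b := ⌈m / μ + R * w⌉₊ with hb
  have hab : a ≤ b := Nat.ceil_mono (by nlinarith)
  have hsplit : U = ∑ k ∈ Finset.range a, p ^ k + ∑ k ∈ Finset.Ico a b, p ^ k + p ^ b * U := by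
    rw [Finset.sum_range_add_sum_Ico _ hab]
    have h1 : (1 - p) * U = 1 := by linear_combination hU
    have h2 := geom_sum_mul_neg p b
    linear_combination (∑ k ∈ Finset.range b, p ^ k) * h1 - U * h2
  have hearly : coeff m (∑ k ∈ Finset.range a, p ^ k) ≤ c / 3 := by
    rcases Nat.eq_zero_or_pos a with h | h
    · rw [h]; simp; positivity
    · obtain ⟨a', ha'⟩ : ∃ a', a = a' + 1 := ⟨a - 1, by omega⟩
      have hlt : (a' : ℝ) < m / μ - R * w := Nat.lt_ceil.1 (by omega)
      obtain ⟨q, q1, q2, q3, q4⟩ := hq s (by rwa [abs_of_pos hsp])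
      have h1 := early_renewals_le hp hp0 (Real.exp_pos s) q1 (q4 hsp.le) a' m
      rw [← Real.exp_nat_mul, ← le_div_iff₀ (Real.exp_pos _)] at h1
      rw [ha']
      refine h1.trans (le_trans ?_ hRc)
      calc q ^ a' / Real.exp (m * s) ≤ Real.exp (μ * s + D * s ^ 2) ^ a' / Real.exp (m * s) := by
            gcongr
        _ = Real.exp (a' * (μ * s + D * s ^ 2) - m * s) := by
            rw [← Real.exp_nat_mul, Real.exp_sub]
        _ ≤ _ := by
            apply Real.exp_le_exp.2
            have e1 : (a' : ℝ) * μ ≤ m - R * w * μ := by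
              have : (a' : ℝ) * μ ≤ (m / μ - R * w) * μ := by gcongr
              rw [sub_mul, div_mul_cancel₀ _ hμ.ne'] at this
              exact this
            have e2 : (a' : ℝ) ≤ m / μ := by nlinarith
            have e3 : D * s ^ 2 * a' ≤ D * δ ^ 2 * (1 / μ) := by
              calc D * s ^ 2 * a' ≤ D * s ^ 2 * (m / μ) := by gcongr
                _ = D * (s ^ 2 * m) * (1 / μ) := by ring
                _ = _ := by rw [hssm]
            have e4 : s * (a' * μ) ≤ s * m - δ * R * μ := by
              calc s * (a' * μ) ≤ s * (m - R * w * μ) := by gcongr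
                _ = s * m - (s * w) * R * μ := by ring
                _ = _ := by rw [hsw]
            have e5 : 0 ≤ D * δ ^ 2 := by positivity
            have e6 : 0 ≤ δ * μ * R := by positivity
            nlinarith
  have hlate : coeff m (p ^ b * U) ≤ c / 3 := by
    obtain ⟨q, q1, q2, q3, -⟩ := hq (-s) (by rwa [abs_neg, abs_of_pos hsp])
    have h1 := late_renewals_le hp (Real.exp_pos (-s))
      (Real.exp_le_one_iff.2 (by linarith)) q1 q3 hU1 b m
    rw [← Real.exp_nat_mul, ← le_div_iff₀ (Real.exp_pos _)] at h1
    refine h1.trans (le_trans ?_ hRc)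
    have hge : m / μ + R * w ≤ b := Nat.le_ceil _
    have hlt : (b : ℝ) < m / μ + R * w + 1 := Nat.ceil_lt_add_one (by positivity)
    calc q ^ b / Real.exp (m * -s) ≤ Real.exp (μ * -s + D * (-s) ^ 2) ^ b / Real.exp (m * -s) := by
          gcongr
      _ = Real.exp (b * (μ * -s + D * (-s) ^ 2) - m * -s) := by
          rw [← Real.exp_nat_mul, Real.exp_sub]
      _ ≤ _ := by
          apply Real.exp_le_exp.2
          have e1 : m + R * w * μ ≤ (b : ℝ) * μ := by
            have : (m / μ + R * w) * μ ≤ (b : ℝ) * μ := by gcongr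
            rw [add_mul, div_mul_cancel₀ _ hμ.ne'] at this
            exact this
          have e4 : s * m + δ * R * μ ≤ s * (b * μ) := by
            calc s * m + δ * R * μ = s * m + (s * w) * R * μ := by rw [hsw]
              _ = s * (m + R * w * μ) := by ring
              _ ≤ _ := by gcongr
          have hsδ : s ≤ δ := div_le_self hδ.le hw1
          have e3 : D * s ^ 2 * b ≤ D * δ ^ 2 * (1 / μ + 1) + δ * μ * R / 2 := by
            calc D * s ^ 2 * b ≤ D * s ^ 2 * (m / μ + R * w + 1) := by gcongr
              _ = D * (s ^ 2 * m) * (1 / μ) + (D * s) * (s * w) * R + D * s ^ 2 := by ring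
              _ = D * δ ^ 2 * (1 / μ) + (D * s) * δ * R + D * s ^ 2 := by rw [hssm, hsw]
              _ ≤ D * δ ^ 2 * (1 / μ) + (D * δ) * δ * R + D * δ ^ 2 := by gcongr
              _ ≤ D * δ ^ 2 * (1 / μ) + (μ / 2) * δ * R + D * δ ^ 2 := by gcongr
              _ = _ := by ring
          nlinarith
  by_contra! hcon
  have hmid : coeff m (∑ k ∈ Finset.Ico a b, p ^ k) ≤ (b - a : ℕ) * (c / 3 / (2 * R + 2) / w) := by
    rw [map_sum]
    have := Finset.sum_le_card_nsmul (Finset.Ico a b) (fun k => coeff m (p ^ k))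
      (c / 3 / (2 * R + 2) / w) (fun k _ => (hcon k).le)
    rw [nsmul_eq_mul, Nat.card_Ico] at this
    exact this
  have hcount : ((b - a : ℕ) : ℝ) < (2 * R + 2) * w := by
    rw [Nat.cast_sub hab]
    have h1 : m / μ - R * w ≤ a := Nat.le_ceil _
    have h2 : (b : ℝ) < m / μ + R * w + 1 := Nat.ceil_lt_add_one (by positivity)
    nlinarith
  have hmid' : coeff m (∑ k ∈ Finset.Ico a b, p ^ k) < c / 3 := by
    refine hmid.trans_lt ?_
    calc _ < ((2 * R + 2) * w) * (c / 3 / (2 * R + 2) / w) := by gcongr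
      _ = c / 3 := by field_simp
  have := hcU m
  rw [hsplit, map_add, map_add] at this
  linarith

/-! ### The saddle point -/

/-- The quadratic equation for `ζ` expresses `α` as `(1 - ζ)(1 + 2ζ) / (2ζ² + 9ζ + 1)`. Substituted into the
quartic this gives `(1 - ζ)⁴ - 9ζ(1 + 2ζ)²` times a factor without positive zeros. -/
lemma zeta_facts {α ζ : ℝ} (hα : 0 < α)
    (hroot : 457 * α ^ 4 - 246 * α ^ 2 + 72 * α - 27 = 0)
    (hζ : ζ = (1 - 9 * α + Real.sqrt (73 * α ^ 2 - 18 * α + 9)) / (4 + 4 * α)) :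
    0 < ζ ∧ ζ < 7 / 100 ∧ 9 * ζ * (1 + 2 * ζ) ^ 2 = (1 - ζ) ^ 4 := by
  have hα1 : α < 1 := by
    by_contra! h
    have h2 : 1 ≤ α ^ 2 := by nlinarith
    nlinarith [mul_nonneg (by linarith : (0:ℝ) ≤ α ^ 2 - 1) (by linarith : (0:ℝ) ≤ α ^ 2)]
  have hD : 0 ≤ 73 * α ^ 2 - 18 * α + 9 := by nlinarith [sq_nonneg (9 * α - 1)]
  set s := Real.sqrt (73 * α ^ 2 - 18 * α + 9) with hs
  have hss : s ^ 2 = 73 * α ^ 2 - 18 * α + 9 := Real.sq_sqrt hD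
  have hs0 : 0 ≤ s := Real.sqrt_nonneg _
  have hlow : 9 * α - 1 < s := by
    by_contra! h
    nlinarith
  have hhigh : s < 3 + 13 * α := by
    by_contra! h
    nlinarith
  have hz : ζ * (4 + 4 * α) = 1 - 9 * α + s := by rw [hζ]; field_simp
  have hζ0 : 0 < ζ := by rw [hζ]; apply div_pos <;> linarith
  have hζ1 : ζ < 1 := by rw [hζ, div_lt_one (by linarith)]; linarith
  have hquad : 2 * (1 + α) * ζ ^ 2 + (9 * α - 1) * ζ + (α - 1) = 0 := by
    have h1 : s = ζ * (4 + 4 * α) - 1 + 9 * α := by linarith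
    rw [h1] at hss
    have h2 : (8 * (1 + α)) * (2 * (1 + α) * ζ ^ 2 + (9 * α - 1) * ζ + (α - 1)) = 0 := by
      linear_combination hss
    exact (mul_eq_zero.1 h2).resolve_left (by positivity)
  have hab : α * (2 * ζ ^ 2 + 9 * ζ + 1) = (1 - ζ) * (1 + 2 * ζ) := by
    linear_combination hquad
  have hprod : (1 - 13 * ζ - 30 * ζ ^ 2 - 40 * ζ ^ 3 + ζ ^ 4) *
      (256 + 1280 * ζ + 768 * ζ ^ 2 + 2816 * ζ ^ 3 + 1792 * ζ ^ 4) = 0 := by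
    have h1 : (2 * ζ ^ 2 + 9 * ζ + 1) ^ 4 *
        (457 * α ^ 4 - 246 * α ^ 2 + 72 * α - 27) = 0 := by rw [hroot, mul_zero]
    have h2 : 457 * (α * (2 * ζ ^ 2 + 9 * ζ + 1)) ^ 4
        - 246 * (α * (2 * ζ ^ 2 + 9 * ζ + 1)) ^ 2 * (2 * ζ ^ 2 + 9 * ζ + 1) ^ 2
        + 72 * (α * (2 * ζ ^ 2 + 9 * ζ + 1)) * (2 * ζ ^ 2 + 9 * ζ + 1) ^ 3
        - 27 * (2 * ζ ^ 2 + 9 * ζ + 1) ^ 4 = 0 := by linear_combination h1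
    rw [hab] at h2
    linear_combination h2
  have hR : 1 - 13 * ζ - 30 * ζ ^ 2 - 40 * ζ ^ 3 + ζ ^ 4 = 0 :=
    (mul_eq_zero.1 hprod).resolve_right (by positivity)
  refine ⟨hζ0, ?_, by linear_combination -hR⟩
  by_contra! h
  have h4 : ζ ^ 4 ≤ ζ ^ 3 := by
    have : ζ ^ 4 = ζ ^ 3 * ζ := by ring
    rw [this]; exact mul_le_of_le_one_right (by positivity) hζ1.le
  have h3 : 0 ≤ ζ ^ 3 := by positivity
  nlinarith

/-- The logarithms multiplied by `α` cancel, so that `γ = -log₂ ζ`. -/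
lemma gamma_eq {α ζ : ℝ} (hζ0 : 0 < ζ) (hζ1 : ζ < 1)
    (hR : 9 * ζ * (1 + 2 * ζ) ^ 2 = (1 - ζ) ^ 4) :
    α * Real.logb 2 9 + 2 * α * Real.logb 2 ((1 + 2 * ζ) / (1 - ζ) ^ 2)
      - (1 - α) * Real.logb 2 ζ = - Real.logb 2 ζ := by
  have h1 : 0 < 1 - ζ := by linarith
  have h : Real.logb 2 (9 * ((1 + 2 * ζ) / (1 - ζ) ^ 2) ^ 2 * ζ) = 0 := by
    have : 9 * ((1 + 2 * ζ) / (1 - ζ) ^ 2) ^ 2 * ζ = 1 := by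
      field_simp
      linear_combination hR
    rw [this, Real.logb_one]
  rw [Real.logb_mul (by positivity) (by positivity), Real.logb_mul (by positivity) (by positivity),
    Real.logb_pow] at h
  push_cast at h
  linear_combination α * h

/-- At `y = √ζ` the weights `coeff n (A 2) * y ^ n` form a probability law. -/
lemma B_sqrt_eq_one {ζ : ℝ} (hζ0 : 0 < ζ) (hζ1 : ζ < 1)
    (hR : 9 * ζ * (1 + 2 * ζ) ^ 2 = (1 - ζ) ^ 4) : B √ζ = 1 := by
  have h1 : 0 < 1 - ζ := by linarith
  unfold B
  rw [Real.sq_sqrt hζ0.le, div_eq_one_iff_eq (by positivity)]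
  refine (pow_left_inj₀ (by positivity) (by positivity) two_ne_zero).1 ?_
  rw [mul_pow, mul_pow, Real.sq_sqrt hζ0.le]
  linear_combination hR

/-! ### Matching bounds for the optimal subword -/

lemma Ev_rescale {F : ℝ⟦X⟧} {x y M : ℝ} (h : Ev (y * x) F M) : Ev x (rescale y F) M := by
  unfold Ev at *
  simpa [coeff_rescale, mul_pow, mul_assoc, mul_left_comm, mul_comm] using h

lemma coeff_le_coeff_mul_mk_one {F : ℝ⟦X⟧} (hF : NN F) (n : ℕ) :
    coeff n F ≤ coeff n (F * PowerSeries.mk 1) := by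
  rw [coeff_mul]
  have := Finset.single_le_sum (s := Finset.HasAntidiagonal.antidiagonal n)
      (f := fun r => coeff r.1 F * coeff r.2 (PowerSeries.mk (1 : ℕ → ℝ)))
      (fun r _ => by simpa using hF r.1)
      (a := (n, 0)) (Finset.HasAntidiagonal.mem_antidiagonal.2 (by simp))
  simpa using this

/-- The lower bound is attained by words all of whose runs have length two. -/
lemma exists_coeff_Dps_ge {ζ : ℝ} (hζ0 : 0 < ζ) (hζ1 : ζ < 7 / 100)
    (hR : 9 * ζ * (1 + 2 * ζ) ^ 2 = (1 - ζ) ^ 4) :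
    ∃ κ : ℝ, 0 < κ ∧ ∀ m : ℕ, 1 ≤ m → ∃ k : ℕ,
      κ / √m ≤ coeff (2 * m) (Dps (List.replicate k 2)) * ζ ^ m := by
  have hy : 0 < √ζ := Real.sqrt_pos.2 hζ0
  have hy2 : √ζ ^ 2 = ζ := Real.sq_sqrt hζ0.le
  -- `13 / 10` works as convergence point because `ζ (13 / 10)² < 0.07 · 1.69 < 1 / 8`
  obtain ⟨κ, hκ, h⟩ := exists_coeff_pow_ge (p := rescale √ζ (A 2)) (x₀ := 13 / 10)
    (fun n => by rw [coeff_rescale]; exact mul_nonneg (by positivity) (NN_A 2 n))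
    (by rw [coeff_rescale, A, coeff_mk]; simp)
    (by rw [coeff_rescale, A, coeff_mk]; norm_num [H]; exact hζ0)
    (Ev_rescale (by
      rw [mul_one, ← B_sqrt_eq_one hζ0 (by linarith) hR]
      exact Ev_A_two hy (by rw [hy2]; linarith)))
    (by norm_num)
    (Ev_rescale (Ev_A_two (by positivity) (by rw [mul_pow, hy2]; linarith)))
  refine ⟨κ / √2, by positivity, fun m hm => ?_⟩
  obtain ⟨k, hk⟩ := h (2 * m) (by omega)
  refine ⟨k, ?_⟩
  have h1 : coeff (2 * m) (A 2 ^ k) ≤ coeff (2 * m) (Dps (List.replicate k 2)) := by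
    unfold Dps
    rw [List.map_replicate, List.prod_replicate]
    exact coeff_le_coeff_mul_mk_one (NN.pow (NN_A 2) k) _
  rw [← map_pow, coeff_rescale, pow_mul, hy2] at hk
  push_cast at hk
  rw [Real.sqrt_mul (by norm_num)] at hk
  rw [div_div]
  refine hk.trans ?_
  rw [mul_comm]
  gcongr

lemma occ_le_maxocc {β : Type*} [DecidableEq β] (w u : List β) : occ w u ≤ maxocc w := by
  refine le_csSup ⟨w.sublists.length, ?_⟩ ⟨u, rfl⟩
  rintro _ ⟨v, rfl⟩
  exact List.count_le_length

lemma exists_occ_eq_maxocc {β : Type*} [DecidableEq β] (w : List β) : ∃ u, occ w u = maxocc w :=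
  Nat.sSup_mem (s := {n : ℕ | ∃ u : List β, occ w u = n}) ⟨_, [], rfl⟩ ⟨w.sublists.length, by
    rintro _ ⟨v, rfl⟩
    exact List.count_le_length⟩

/-- If `u` starts with the letter `1`, the first block cannot be used and `2m - 1` blocks remain. -/
lemma occ_altw_le (m : ℕ) (hm : 1 ≤ m) (u : List (Fin 2)) : ∃ as N, 2 * m - 1 ≤ N ∧ N ≤ 2 * m ∧
    (occ (altw 0 (2 * m)) u : ℝ) = coeff N (Dps as) := by
  obtain ⟨c, as, has, rfl⟩ := exists_runs u
  by_cases hc : c = 0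
  · subst hc
    exact ⟨as, 2 * m, by omega, le_rfl, occ_runs as has 0 _⟩
  · have hc1 : c = 0 + 1 := fin2_eq_of_ne hc
    subst hc1
    refine ⟨as, 2 * m - 1, le_rfl, by omega, ?_⟩
    have hh := runs_head 0 as has
    rw [← occ_runs as has (0 + 1), show 2 * m = (2 * m - 1) + 1 by omega, altw,
      occ_cons_of_head _ _ _ hh, occ_cons_of_head _ _ _ hh, occ_cons_of_head _ _ _ hh]
    simp

lemma B_sqrt_tenth : B √(1 / 10) ≤ 2 := by
  have h : √(1 / 10 : ℝ) ≤ 32 / 100 := by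
    rw [Real.sqrt_le_left (by norm_num)]; norm_num
  unfold B
  rw [Real.sq_sqrt (by norm_num)]
  norm_num at h ⊢
  linarith

lemma pow_scale {t : ℝ} (ht : 0 < t) (ht1 : t ≤ 1) {x : ℝ} (hx : 0 ≤ x) {m N : ℕ}
    (hN : N ≤ 2 * m) : x * t ^ m ≤ x * √t ^ N := by
  have h : t ^ m = √t ^ (2 * m) := by rw [pow_mul, Real.sq_sqrt ht.le]
  rw [h]
  gcongr x * ?_
  exact pow_le_pow_of_le_one (Real.sqrt_nonneg t) (Real.sqrt_le_one.2 ht1) hN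

lemma two_pow_le {r m : ℕ} (h : 4 * r ≤ m) : (2 : ℝ) ^ r ≤ (5 / 4) ^ m := by
  calc (2 : ℝ) ^ r ≤ ((5 / 4) ^ 4) ^ r := by gcongr; norm_num
    _ = (5 / 4) ^ (4 * r) := by rw [pow_mul]
    _ ≤ (5 / 4) ^ m := by gcongr; norm_num

lemma sqrt_le_exp_growth (m : ℕ) : √(m : ℝ) ≤ 9 * (8 / 7) ^ m := by
  have h1 := one_add_mul_le_pow (a := (1 / 7 : ℝ)) (by norm_num) m
  have h2 : √(m : ℝ) ≤ 1 + m := by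
    rw [Real.sqrt_le_left (by positivity)]
    nlinarith [(Nat.cast_nonneg m : (0:ℝ) ≤ m)]
  norm_num at h1
  linarith [(Nat.cast_nonneg m : (0:ℝ) ≤ m)]

/-- If there are at least `m / 4` runs, the bound `coeff_Dps_le` at `y = √ζ` gives the factor `1 / √m`. Words
with fewer runs have exponentially fewer occurrences, as is seen from the same bound at `y = √(1 / 10)`. -/
lemma coeff_Dps_upper {ζ : ℝ} (hζ0 : 0 < ζ) (hζ1 : ζ < 7 / 100)
    (hR : 9 * ζ * (1 + 2 * ζ) ^ 2 = (1 - ζ) ^ 4) :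
    ∃ K : ℝ, 0 < K ∧ ∀ (as : List ℕ) (m N : ℕ), 1 ≤ m → N ≤ 2 * m → 0 ≤ coeff N (Dps as) →
      coeff N (Dps as) * ζ ^ m ≤ K / √m := by
  have hy2 : √ζ ^ 2 = ζ := Real.sq_sqrt hζ0.le
  obtain ⟨K, hK, h⟩ := coeff_Dps_le (y := √ζ) (Real.sqrt_pos.2 hζ0) (by rw [hy2]; linarith)
  obtain ⟨L, hL, h'⟩ := coeff_Dps_le (y := √(1 / 10)) (by positivity)
    (by rw [Real.sq_sqrt (by norm_num)]; norm_num)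
  refine ⟨2 * K + 9 * L, by positivity, fun as m N hm hN h0 => ?_⟩
  have hm0 : (0 : ℝ) < m := by exact_mod_cast hm
  have hw : 0 < √(m : ℝ) := Real.sqrt_pos.2 hm0
  rw [le_div_iff₀ hw]
  rcases le_or_gt m (4 * as.length) with hr | hr
  · have h1 := (pow_scale hζ0 (by linarith) h0 hN).trans (h as N)
    rw [B_sqrt_eq_one hζ0 (by linarith) hR, one_pow, mul_one, le_div_iff₀ (by positivity)] at h1
    have h2 : √(m : ℝ) ≤ 2 * √((as.length : ℝ) + 1) := by
      rw [Real.sqrt_le_left (by positivity), mul_pow, Real.sq_sqrt (by positivity)]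
      have : (m : ℝ) ≤ 4 * as.length := by exact_mod_cast hr
      linarith
    have h3 : 0 ≤ coeff N (Dps as) * ζ ^ m := by positivity
    nlinarith
  · have h1 := (pow_scale (t := 1 / 10) (by norm_num) (by norm_num) h0 hN).trans (h' as N)
    have hB : 0 ≤ B √(1 / 10) := by unfold B; positivity
    have h2 : coeff N (Dps as) * (1 / 10) ^ m ≤ L * (5 / 4) ^ m := by
      refine h1.trans ?_
      calc L * B √(1 / 10) ^ as.length / √((as.length : ℝ) + 1)
          ≤ L * B √(1 / 10) ^ as.length := by
            refine div_le_self (by positivity) (Real.one_le_sqrt.2 ?_)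
            linarith [(Nat.cast_nonneg as.length : (0 : ℝ) ≤ as.length)]
        _ ≤ L * 2 ^ as.length := by
            gcongr
            exact B_sqrt_tenth
        _ ≤ _ := by gcongr; exact two_pow_le hr.le
    calc coeff N (Dps as) * ζ ^ m * √m
        ≤ coeff N (Dps as) * (7 / 100) ^ m * (9 * (8 / 7) ^ m) := by
          gcongr
          exact sqrt_le_exp_growth m
      _ = 9 * (4 / 5) ^ m * (coeff N (Dps as) * (1 / 10) ^ m) := by
          have : ((7 : ℝ) / 100) ^ m * (8 / 7) ^ m = (4 / 5) ^ m * (1 / 10) ^ m := by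
            rw [← mul_pow, ← mul_pow]; norm_num
          linear_combination 9 * coeff N (Dps as) * this
      _ ≤ 9 * (4 / 5) ^ m * (L * (5 / 4) ^ m) := by gcongr
      _ = 9 * L := by
          have : ((4 : ℝ) / 5) ^ m * (5 / 4) ^ m = 1 := by rw [← mul_pow]; norm_num
          linear_combination 9 * L * this
      _ ≤ _ := by linarith

theorem stmt_17 (α : ℝ) (hα : 0 < α)
    (hroot : 457 * α ^ 4 - 246 * α ^ 2 + 72 * α - 27 = 0)
    (huniq : ∀ β : ℝ, 0 < β → 457 * β ^ 4 - 246 * β ^ 2 + 72 * β - 27 = 0 → β = α)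
    (ζ γ : ℝ)
    (hζ : ζ = (1 - 9 * α + Real.sqrt (73 * α ^ 2 - 18 * α + 9)) / (4 + 4 * α))
    (hγ : γ = α * Real.logb 2 9 + 2 * α * Real.logb 2 ((1 + 2 * ζ) / (1 - ζ) ^ 2)
      - (1 - α) * Real.logb 2 ζ) :
    ∃ C : ℝ, ∀ m : ℕ, 1 ≤ m →
      |Real.logb 2 (maxocc (rep ([0, 0, 0, 1, 1, 1] : List (Fin 2)) m)) -
        (γ * m - (1 / 2) * Real.logb 2 m)| ≤ C := by
  obtain ⟨hζ0, hζ1, hR⟩ := zeta_facts hα hroot hζ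
  have hγ' : γ = -Real.logb 2 ζ := hγ.trans (gamma_eq hζ0 (by linarith) hR)
  obtain ⟨κ, hκ, hlow⟩ := exists_coeff_Dps_ge hζ0 hζ1 hR
  obtain ⟨K, hK, hup⟩ := coeff_Dps_upper hζ0 hζ1 hR
  refine ⟨max |Real.logb 2 κ| |Real.logb 2 K|, fun m hm => ?_⟩
  have hm0 : (0 : ℝ) < m := by exact_mod_cast hm
  have hw : 0 < √(m : ℝ) := Real.sqrt_pos.2 hm0
  rw [rep_eq_altw]
  set M : ℝ := (maxocc (altw 0 (2 * m)) : ℝ) with hM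
  have hl : κ ≤ M * ζ ^ m * √m := by
    obtain ⟨k, hk⟩ := hlow m hm
    rw [← occ_runs (List.replicate k 2)
      (fun a ha => by rw [List.eq_of_mem_replicate ha]; norm_num) 0, div_le_iff₀ hw] at hk
    refine hk.trans ?_
    gcongr
    exact Nat.cast_le.2 (occ_le_maxocc _ _)
  have hu : M * ζ ^ m * √m ≤ K := by
    obtain ⟨u, hu⟩ := exists_occ_eq_maxocc (altw 0 (2 * m))
    obtain ⟨as, N, -, hN, hN'⟩ := occ_altw_le m hm u
    rw [hu] at hN'
    have := hup as m N hm hN (by rw [← hN']; positivity)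
    rwa [← hN', le_div_iff₀ hw] at this
  have hMpos : 0 < M := by
    by_contra! h
    have : M = 0 := le_antisymm h (by positivity)
    rw [this] at hl
    linarith
  have hexp : Real.logb 2 M - (γ * m - (1 / 2) * Real.logb 2 m) =
      Real.logb 2 (M * ζ ^ m * √m) := by
    rw [Real.logb_mul (by positivity) (by positivity), Real.logb_mul (by positivity) (by positivity),
      Real.logb_pow, Real.sqrt_eq_rpow, Real.logb_rpow_eq_mul_logb_of_pos hm0, hγ']
    ring
  rw [hexp]
  have h1 := Real.logb_le_logb_of_le one_lt_two hκ hl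
  have h2 := Real.logb_le_logb_of_le one_lt_two (hκ.trans_le hl) hu
  exact abs_le_max_abs_abs h1 h2
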